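/- Let G be a finite simple graph on n ≥ 2 vertices and let α be a real number with α < 0. Then 2^{-1+α/2} · n · (n−1)^{α+1} ≤ SO_α(G) + SO_α(G̅) < 2^{α/2} · n · (n−1), and the left equality holds if and only if G is the complete graph K_n or the empty graph on n vertices. -/

import Mathlib

open Finset

variable {V : Type*}

/-- The general Sombor index `SO_α(G) = ∑_{uv ∈ E(G)} (d(u)^2 + d(v)^2)^(α/2)`. -/
noncomputable def generalSombor [Fintype V] [DecidableEq V] (G : SimpleGraph V)
    [DecidableRel G.Adj] (α : ℝ) : ℝ :=
  ∑ e ∈ G.edgeFinset,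
    Sym2.lift ⟨fun u v => ((G.degree u : ℝ) ^ 2 + (G.degree v : ℝ) ^ 2) ^ (α / 2),
      fun u v => by dsimp only; rw [add_comm]⟩ e

/-!
An edge `uv` satisfies `1 ≤ d(u), d(v) ≤ n - 1`, so for `α < 0` it contributes at most `2 ^ (α / 2)`
and at least `(2 (n - 1) ^ 2) ^ (α / 2)` to the Sombor index. Summing over the `n (n - 1) / 2` edges
of `G` and `Gᶜ` gives both bounds, the upper one with a factor of two to spare. The lower bound for
`G` alone is attained precisely when every vertex with a neighbour is adjacent to all others. One
edge then makes `G` complete, so `G` is complete or empty, and then the same holds for `Gᶜ`.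
-/

theorem forall_adj_isUniversal_iff_eq_top_or_eq_bot (G : SimpleGraph V) :
    (∀ u v, G.Adj u v → G.IsUniversal u) ↔ G = ⊤ ∨ G = ⊥ := by
  constructor
  · intro h
    rw [or_iff_not_imp_right]
    intro hG
    obtain ⟨u, v, huv⟩ := SimpleGraph.ne_bot_iff_exists_adj.1 hG
    refine SimpleGraph.eq_top_iff_forall_isUniversal.2 fun w => ?_
    rcases eq_or_ne u w with rfl | huw
    · exact h u v huv
    · exact h w u (h u v huv huw).symm
  · rintro (rfl | rfl) u v huv
    · exact .top
    · exact huv.elim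

theorem add_sq_eq_two_mul_sq_iff {R : Type*} [Semiring R] [LinearOrder R] [IsStrictOrderedRing R]
    {a b c : R} (ha : 0 ≤ a) (hb : 0 ≤ b) (hac : a ≤ c) (hbc : b ≤ c) :
    a ^ 2 + b ^ 2 = 2 * c ^ 2 ↔ a = c ∧ b = c := by
  rw [two_mul, add_eq_add_iff_eq_and_eq (by gcongr) (by gcongr),
    pow_left_inj₀ ha (ha.trans hac) two_ne_zero, pow_left_inj₀ hb (hb.trans hbc) two_ne_zero]

theorem two_rpow_mul_mul_sub_one_rpow {x : ℝ} (hx : 1 < x) (α : ℝ) :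
    (2 : ℝ) ^ (-1 + α / 2) * x * (x - 1) ^ (α + 1) =
      x * (x - 1) / 2 * (2 * (x - 1) ^ 2) ^ (α / 2) := by
  have hx' : 0 < x - 1 := sub_pos.2 hx
  have hsq : ((x - 1) ^ 2) ^ (α / 2) = (x - 1) ^ α := by
    rw [← Real.rpow_natCast_mul hx'.le, Nat.cast_ofNat, mul_div_cancel₀ α two_ne_zero]
  rw [Real.mul_rpow zero_le_two (sq_nonneg _), hsq, Real.rpow_add two_pos, Real.rpow_add hx',
    Real.rpow_one, Real.rpow_neg_one]
  ring

section Sombor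

variable [Fintype V] (G : SimpleGraph V) [DecidableRel G.Adj]

theorem degree_le_card_sub_one (v : V) : G.degree v ≤ Fintype.card V - 1 :=
  Nat.le_sub_one_of_lt (G.degree_lt_card_verts v)

theorem card_edgeFinset_add_card_edgeFinset_compl [DecidableEq V] :
    #G.edgeFinset + #Gᶜ.edgeFinset = (Fintype.card V).choose 2 := by
  rw [← SimpleGraph.card_edgeFinset_top_eq_card_choose_two,
    ← card_union_of_disjoint (SimpleGraph.disjoint_edgeFinset.2 disjoint_compl_right),
    ← SimpleGraph.edgeFinset_sup]
  congr!
  exact sup_compl_eq_top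

theorem cast_card_edgeFinset_add_card_edgeFinset_compl [DecidableEq V] :
    (#G.edgeFinset + #Gᶜ.edgeFinset : ℝ) = Fintype.card V * ((Fintype.card V : ℝ) - 1) / 2 := by
  rw [← Nat.cast_choose_two, ← card_edgeFinset_add_card_edgeFinset_compl G, Nat.cast_add]

/-- The contribution `(d(u)^2 + d(v)^2)^(α/2)` of the unordered pair `uv` to the general Sombor
index, which is the sum of the weights of the edges. It is defined on all of `Sym2 V`, so that it
makes sense without a proof of adjacency. -/
noncomputable def somborWeight (α : ℝ) : Sym2 V → ℝ :=
  Sym2.lift ⟨fun u v => ((G.degree u : ℝ) ^ 2 + (G.degree v : ℝ) ^ 2) ^ (α / 2),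
    fun u v => by dsimp only; rw [add_comm]⟩

theorem somborWeight_mk (α : ℝ) (u v : V) :
    somborWeight G α s(u, v) = ((G.degree u : ℝ) ^ 2 + (G.degree v : ℝ) ^ 2) ^ (α / 2) :=
  rfl

variable {G} {α : ℝ} {δ Δ : ℕ}

theorem le_somborWeight (hα : α ≤ 0) (hΔ : ∀ v, G.degree v ≤ Δ) {e : Sym2 V}
    (he : e ∈ G.edgeSet) : (2 * (Δ : ℝ) ^ 2) ^ (α / 2) ≤ somborWeight G α e := by
  induction e with | _ u v
  have hu : 0 < G.degree u := (G.degree_pos_iff_exists_adj u).2 ⟨v, he⟩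
  rw [somborWeight_mk, two_mul]
  refine Real.rpow_le_rpow_of_nonpos (by positivity) ?_ (by linarith)
  gcongr <;> exact hΔ _

theorem somborWeight_le (hα : α ≤ 0) (hδ₀ : 0 < δ) (hδ : ∀ u v, G.Adj u v → δ ≤ G.degree u)
    {e : Sym2 V} (he : e ∈ G.edgeSet) :
    somborWeight G α e ≤ (2 * (δ : ℝ) ^ 2) ^ (α / 2) := by
  induction e with | _ u v
  have huv : G.Adj u v := he
  rw [somborWeight_mk, two_mul]
  refine Real.rpow_le_rpow_of_nonpos (by positivity) ?_ (by linarith)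
  gcongr
  · exact hδ u v huv
  · exact hδ v u huv.symm

theorem eq_somborWeight_mk_iff (hα : α ≠ 0) (hΔ : ∀ v, G.degree v ≤ Δ) (u v : V) :
    (2 * (Δ : ℝ) ^ 2) ^ (α / 2) = somborWeight G α s(u, v) ↔
      G.degree u = Δ ∧ G.degree v = Δ := by
  rw [eq_comm, somborWeight_mk,
    Real.rpow_left_inj (by positivity) (by positivity) (div_ne_zero hα two_ne_zero),
    add_sq_eq_two_mul_sq_iff (by positivity) (by positivity) (mod_cast hΔ u) (mod_cast hΔ v),
    Nat.cast_inj, Nat.cast_inj]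

variable [DecidableEq V]

variable (G α) in
theorem generalSombor_eq_sum_somborWeight :
    generalSombor G α = ∑ e ∈ G.edgeFinset, somborWeight G α e :=
  rfl

theorem card_edgeFinset_mul_le_generalSombor (hα : α ≤ 0) (hΔ : ∀ v, G.degree v ≤ Δ) :
    #G.edgeFinset * (2 * (Δ : ℝ) ^ 2) ^ (α / 2) ≤ generalSombor G α := by
  rw [← nsmul_eq_mul]
  exact card_nsmul_le_sum _ _ _ fun _ he =>
    le_somborWeight hα hΔ (SimpleGraph.mem_edgeFinset.1 he)

theorem generalSombor_le_card_edgeFinset_mul (hα : α ≤ 0) (hδ₀ : 0 < δ)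
    (hδ : ∀ u v, G.Adj u v → δ ≤ G.degree u) :
    generalSombor G α ≤ #G.edgeFinset * (2 * (δ : ℝ) ^ 2) ^ (α / 2) := by
  rw [← nsmul_eq_mul]
  exact sum_le_card_nsmul _ _ _ fun _ he =>
    somborWeight_le hα hδ₀ hδ (SimpleGraph.mem_edgeFinset.1 he)

theorem card_edgeFinset_mul_eq_generalSombor_iff (hα : α < 0) (hΔ : ∀ v, G.degree v ≤ Δ) :
    #G.edgeFinset * (2 * (Δ : ℝ) ^ 2) ^ (α / 2) = generalSombor G α ↔
      ∀ u v, G.Adj u v → G.degree u = Δ := by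
  rw [← nsmul_eq_mul, ← sum_const, generalSombor_eq_sum_somborWeight,
    sum_eq_sum_iff_of_le fun _ he => le_somborWeight hα.le hΔ (SimpleGraph.mem_edgeFinset.1 he)]
  simp only [Sym2.forall, SimpleGraph.mem_edgeFinset, SimpleGraph.mem_edgeSet,
    eq_somborWeight_mk_iff hα.ne hΔ]
  exact ⟨fun h u v huv => (h u v huv).1, fun h u v huv => ⟨h u v huv, h v u huv.symm⟩⟩

theorem generalSombor_le_card_edgeFinset_mul_two_rpow (hα : α ≤ 0) :
    generalSombor G α ≤ #G.edgeFinset * (2 : ℝ) ^ (α / 2) := by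
  have hδ : ∀ u v, G.Adj u v → 1 ≤ G.degree u :=
    fun u v huv => (G.degree_pos_iff_exists_adj u).2 ⟨v, huv⟩
  simpa using generalSombor_le_card_edgeFinset_mul hα one_pos hδ

variable (G) in
theorem generalSombor_add_generalSombor_compl_le (hα : α ≤ 0) :
    generalSombor G α + generalSombor Gᶜ α ≤
      (2 : ℝ) ^ (α / 2) * Fintype.card V * ((Fintype.card V : ℝ) - 1) / 2 :=
  calc generalSombor G α + generalSombor Gᶜ α
      ≤ #G.edgeFinset * (2 : ℝ) ^ (α / 2) + #Gᶜ.edgeFinset * (2 : ℝ) ^ (α / 2) :=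
        add_le_add (generalSombor_le_card_edgeFinset_mul_two_rpow hα)
          (generalSombor_le_card_edgeFinset_mul_two_rpow hα)
    _ = (2 : ℝ) ^ (α / 2) * Fintype.card V * ((Fintype.card V : ℝ) - 1) / 2 := by
        rw [← add_mul, cast_card_edgeFinset_add_card_edgeFinset_compl]
        ring

theorem card_edgeFinset_mul_eq_generalSombor_iff_eq_top_or_eq_bot (hα : α < 0) :
    #G.edgeFinset * (2 * ((Fintype.card V - 1 : ℕ) : ℝ) ^ 2) ^ (α / 2) = generalSombor G α ↔
      G = ⊤ ∨ G = ⊥ := by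
  simp only [card_edgeFinset_mul_eq_generalSombor_iff hα (degree_le_card_sub_one G),
    SimpleGraph.degree_eq_card_sub_one, forall_adj_isUniversal_iff_eq_top_or_eq_bot]

end Sombor

theorem nordhaus_gaddum_of_neg [Fintype V] [DecidableEq V]
    (G : SimpleGraph V) [DecidableRel G.Adj]
    (hn : 2 ≤ Fintype.card V) (α : ℝ) (hα : α < 0) :
    ((2 : ℝ) ^ (-1 + α / 2) * (Fintype.card V : ℝ) * ((Fintype.card V : ℝ) - 1) ^ (α + 1) ≤
        generalSombor G α + generalSombor Gᶜ α) ∧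
      (generalSombor G α + generalSombor Gᶜ α <
        (2 : ℝ) ^ (α / 2) * (Fintype.card V : ℝ) * ((Fintype.card V : ℝ) - 1)) ∧
      ((2 : ℝ) ^ (-1 + α / 2) * (Fintype.card V : ℝ) * ((Fintype.card V : ℝ) - 1) ^ (α + 1) =
          generalSombor G α + generalSombor Gᶜ α ↔
        G = ⊤ ∨ G = ⊥) := by
  have hn' : (1 : ℝ) < Fintype.card V := mod_cast hn
  have hlower := card_edgeFinset_mul_le_generalSombor hα.le (degree_le_card_sub_one G)
  have hlower_compl := card_edgeFinset_mul_le_generalSombor hα.le (degree_le_card_sub_one Gᶜ)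
  have hbound : (2 : ℝ) ^ (-1 + α / 2) * Fintype.card V * ((Fintype.card V : ℝ) - 1) ^ (α + 1) =
      #G.edgeFinset * (2 * ((Fintype.card V - 1 : ℕ) : ℝ) ^ 2) ^ (α / 2) +
        #Gᶜ.edgeFinset * (2 * ((Fintype.card V - 1 : ℕ) : ℝ) ^ 2) ^ (α / 2) := by
    rw [two_rpow_mul_mul_sub_one_rpow hn', ← add_mul,
      cast_card_edgeFinset_add_card_edgeFinset_compl, Nat.cast_pred (by lia)]
  rw [hbound]
  refine ⟨add_le_add hlower hlower_compl, ?_, ?_⟩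
  · exact (generalSombor_add_generalSombor_compl_le G hα.le).trans_lt
      (half_lt_self (mul_pos (by positivity) (sub_pos.2 hn')))
  · rw [add_eq_add_iff_eq_and_eq hlower hlower_compl,
      card_edgeFinset_mul_eq_generalSombor_iff_eq_top_or_eq_bot hα,
      card_edgeFinset_mul_eq_generalSombor_iff_eq_top_or_eq_bot hα, compl_eq_top, compl_eq_bot,
      or_comm (a := G = ⊥), and_self]
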